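/- Let P̂_n(q) be the Segre product of the subspace lattice B_n(q) with itself: the subposet of B_n(q) × B_n(q) consisting of pairs (X,Y) with dim X = dim Y. The Möbius function of P̂_n(q) between its minimum (0,0) and maximum (F_q^n, F_q^n) satisfies μ(0̂, 1̂) = (-1)^n W_n(q), where W_n(q) = ∑ q^{inv(σ)+inv(τ)} over pairs (σ,τ) of permutations of {1,...,n} with no common ascent. -/

import Mathlib

open Finset

/-- A common ascent of a pair of permutations of `{1,...,n}`:
an index `i` with `i+1 = j ≤ n` such that both permutations increase from `i` to `j`. -/
def CommonAscent {n : ℕ} (σ τ : Equiv.Perm (Fin n)) : Prop :=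
  ∃ i j : Fin n, (i : ℕ) + 1 = (j : ℕ) ∧ σ i < σ j ∧ τ i < τ j

instance {n : ℕ} : DecidablePred
    (fun p : Equiv.Perm (Fin n) × Equiv.Perm (Fin n) => CommonAscent p.1 p.2) := fun _ => by
  unfold CommonAscent; infer_instance

/-- The number of inversions of a permutation. -/
def inversions {n : ℕ} (σ : Equiv.Perm (Fin n)) : ℕ :=
  (Finset.univ.filter (fun p : Fin n × Fin n => p.1 < p.2 ∧ σ p.2 < σ p.1)).card

/-- `W n = ∑ q^(inv σ + inv τ)` over pairs of permutations with no common ascent,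
as a polynomial in `q`. -/
noncomputable def W (n : ℕ) : Polynomial ℚ :=
  ∑ p ∈ Finset.univ.filter
      (fun p : Equiv.Perm (Fin n) × Equiv.Perm (Fin n) => ¬ CommonAscent p.1 p.2),
    Polynomial.X ^ (inversions p.1 + inversions p.2)

open scoped Classical

/-- The Segre product of the subspace lattice `B_n(q)` with itself: pairs of subspaces
of `F_q^n` of equal dimension, ordered componentwise. -/
def SegrePoset (F : Type) [Field F] (n : ℕ) : Type :=
  {p : Submodule F (Fin n → F) × Submodule F (Fin n → F) //
    Module.finrank F p.1 = Module.finrank F p.2}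

instance (F : Type) [Field F] (n : ℕ) : PartialOrder (SegrePoset F n) :=
  inferInstanceAs (PartialOrder (Subtype _))

noncomputable instance (F : Type) [Field F] [Fintype F] (n : ℕ) : Fintype (SegrePoset F n) := by
  have : Finite (Submodule F (Fin n → F)) :=
    Finite.of_injective (fun X => (X : Set (Fin n → F))) SetLike.coe_injective
  have : Finite (SegrePoset F n) := by unfold SegrePoset; infer_instance
  exact Fintype.ofFinite _

noncomputable instance (F : Type) [Field F] [Fintype F] (n : ℕ) :
    LocallyFiniteOrder (SegrePoset F n) :=
  Fintype.toLocallyFiniteOrder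

/-- The bottom element `(0, 0)` of the Segre product. -/
def segreBot (F : Type) [Field F] (n : ℕ) : SegrePoset F n := ⟨(⊥, ⊥), rfl⟩

/-- The top element `(F_q^n, F_q^n)` of the Segre product. -/
def segreTop (F : Type) [Field F] (n : ℕ) : SegrePoset F n := ⟨(⊤, ⊤), rfl⟩

/-- The Gaussian binomial coefficient `[n choose k]_q`, defined by the `q`-Pascal recursion. -/
def gaussBinom (q : ℚ) : ℕ → ℕ → ℚ
  | _, 0 => 1
  | 0, _ + 1 => 0
  | n + 1, k + 1 => gaussBinom q n k + q ^ (k + 1) * gaussBinom q n (k + 1)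

section GaussBinom

variable (q : ℚ)

@[simp]
theorem gaussBinom_zero_right (n : ℕ) : gaussBinom q n 0 = 1 := by
  cases n <;> rfl

@[simp]
theorem gaussBinom_zero_succ (k : ℕ) : gaussBinom q 0 (k + 1) = 0 := rfl

theorem gaussBinom_succ_succ (n k : ℕ) :
    gaussBinom q (n + 1) (k + 1) = gaussBinom q n k + q ^ (k + 1) * gaussBinom q n (k + 1) := rfl

theorem gaussBinom_eq_zero_of_lt {n k : ℕ} (h : n < k) : gaussBinom q n k = 0 := by
  induction n generalizing k with
  | zero => obtain ⟨k, rfl⟩ := Nat.exists_eq_succ_of_ne_zero h.ne'; rfl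
  | succ n ih =>
    obtain ⟨k, rfl⟩ := Nat.exists_eq_succ_of_ne_zero (Nat.ne_zero_of_lt h)
    rw [Nat.succ_eq_add_one, gaussBinom_succ_succ, ih (by omega), ih (by omega)]
    ring

@[simp]
theorem gaussBinom_self (n : ℕ) : gaussBinom q n n = 1 := by
  induction n with
  | zero => rfl
  | succ n ih => rw [gaussBinom_succ_succ, ih, gaussBinom_eq_zero_of_lt q (Nat.lt_succ_self n)]; ring

/-- The product formula for Gaussian binomials, with denominators cleared. -/
theorem gaussBinom_mul_prod_mul_prod (a b : ℕ) :
    gaussBinom q (a + b) a * (∏ i ∈ range a, (q ^ (i + 1) - 1)) *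
      (∏ i ∈ range b, (q ^ (i + 1) - 1)) = ∏ i ∈ range (a + b), (q ^ (i + 1) - 1) := by
  induction a generalizing b with
  | zero => simp
  | succ a iha =>
    induction b with
    | zero => simp
    | succ b ihb =>
      have h₁ := iha (b + 1)
      rw [show a + 1 + (b + 1) = (a + b + 1) + 1 by ring, gaussBinom_succ_succ]
      rw [show a + 1 + b = a + b + 1 by ring] at ihb
      rw [show a + (b + 1) = a + b + 1 by ring] at h₁
      rw [prod_range_succ _ (a + b + 1), prod_range_succ _ a, prod_range_succ _ b]
      rw [prod_range_succ _ a] at ihb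
      rw [prod_range_succ _ b] at h₁
      linear_combination (q ^ (a + 1) - 1) * h₁ + q ^ (a + 1) * (q ^ (b + 1) - 1) * ihb

theorem prod_range_pow_sub_one_ne_zero {q : ℚ} (hq : 1 < q) (n : ℕ) :
    ∏ i ∈ range n, (q ^ (i + 1) - 1) ≠ 0 :=
  prod_ne_zero_iff.2 fun i _ => (sub_pos.2 (one_lt_pow₀ hq i.succ_ne_zero)).ne'

theorem gaussBinom_symm {q : ℚ} (hq : 1 < q) {n k : ℕ} (hk : k ≤ n) :
    gaussBinom q n (n - k) = gaussBinom q n k := by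
  obtain ⟨b, rfl⟩ := Nat.exists_eq_add_of_le hk
  have h₁ := gaussBinom_mul_prod_mul_prod q k b
  have h₂ := gaussBinom_mul_prod_mul_prod q b k
  rw [add_comm b k, ← h₁] at h₂
  rw [Nat.add_sub_cancel_left]
  refine mul_right_cancel₀ (mul_ne_zero (prod_range_pow_sub_one_ne_zero hq b)
    (prod_range_pow_sub_one_ne_zero hq k)) ?_
  linear_combination h₂

theorem prod_range_pow_sub_pow_mul (k b : ℕ) :
    (∏ i ∈ range k, (q ^ (k + b) - q ^ i)) * ∏ i ∈ range b, (q ^ (i + 1) - 1) =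
      (∏ i ∈ range k, q ^ i) * ∏ i ∈ range (k + b), (q ^ (i + 1) - 1) := by
  induction k generalizing b with
  | zero => simp
  | succ k ih =>
    have h := ih (b + 1)
    rw [prod_range_succ _ b] at h
    rw [prod_range_succ _ k, prod_range_succ _ k, show k + 1 + b = k + (b + 1) by ring]
    linear_combination q ^ k * h

theorem gaussBinom_mul_prod_pow_sub_pow {q : ℚ} (hq : 1 < q) {n k : ℕ} (hk : k ≤ n) :
    gaussBinom q n k * ∏ i ∈ range k, (q ^ k - q ^ i) = ∏ i ∈ range k, (q ^ n - q ^ i) := by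
  obtain ⟨b, rfl⟩ := Nat.exists_eq_add_of_le hk
  have h₁ := prod_range_pow_sub_pow_mul q k b
  have h₂ := prod_range_pow_sub_pow_mul q k 0
  simp only [add_zero, range_zero, prod_empty, mul_one] at h₂
  rw [← gaussBinom_mul_prod_mul_prod] at h₁
  refine mul_right_cancel₀ (prod_range_pow_sub_one_ne_zero hq b) ?_
  rw [h₁, h₂]
  ring

/-- A hockey stick identity for Gaussian binomials. -/
theorem sum_range_pow_mul_gaussBinom (n j : ℕ) {a : ℕ} (ha : a ≤ n + 1) :
    ∑ i ∈ range a, q ^ ((j + 1) * (n - i)) * gaussBinom q i j =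
      q ^ ((j + 1) * (n + 1 - a)) * gaussBinom q a (j + 1) := by
  induction a with
  | zero => simp
  | succ a ih =>
    rw [sum_range_succ, ih (by omega), gaussBinom_succ_succ]
    obtain ⟨c, rfl⟩ : ∃ c, n = a + c := Nat.exists_eq_add_of_le (by omega)
    rw [show a + c + 1 - a = c + 1 by omega, show a + c - a = c by omega,
      show a + c + 1 - (a + 1) = c by omega]
    ring

end GaussBinom

namespace Equiv.Perm

variable {n : ℕ}

/-- The permutation of `Fin (n + 1)` whose last value is `p` and whose other values
are in the same relative order as those of `π`. -/
def snocPerm (p : Fin (n + 1)) (π : Equiv.Perm (Fin n)) : Equiv.Perm (Fin (n + 1)) :=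
  ((finSuccEquiv' (Fin.last n)).trans (Equiv.optionCongr π)).trans (finSuccEquiv' p).symm

@[simp]
theorem snocPerm_last (p : Fin (n + 1)) (π : Equiv.Perm (Fin n)) :
    snocPerm p π (Fin.last n) = p := by
  simp [snocPerm]

@[simp]
theorem snocPerm_castSucc (p : Fin (n + 1)) (π : Equiv.Perm (Fin n)) (i : Fin n) :
    snocPerm p π i.castSucc = p.succAbove (π i) := by
  rw [← Fin.succAbove_last_apply]
  simp [snocPerm, -Fin.succAbove_last]

theorem snocPerm_bijective :
    Function.Bijective fun x : Fin (n + 1) × Equiv.Perm (Fin n) => snocPerm x.1 x.2 := by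
  rw [Fintype.bijective_iff_injective_and_card]
  constructor
  · rintro ⟨p, π⟩ ⟨p', π'⟩ h
    obtain rfl : p = p' := by simpa using congrArg (fun σ => σ (Fin.last n)) h
    refine Prod.ext rfl (Equiv.ext fun i => ?_)
    simpa using congrArg (fun σ => σ i.castSucc) h
  · simp [Fintype.card_perm, Nat.factorial_succ]

theorem sum_eq_sum_snocPerm (f : Equiv.Perm (Fin (n + 1)) → ℚ) :
    ∑ σ, f σ = ∑ p, ∑ π, f (snocPerm p π) := by
  rw [← Fintype.sum_prod_type']
  exact (snocPerm_bijective.sum_comp f).symm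

theorem card_filter_le_castSucc (p : Fin (n + 1)) :
    #{i : Fin n | p ≤ i.castSucc} = n - p := by
  have h := Fin.card_filter_val_lt (n := n) (m := p)
  have := card_filter_add_card_filter_not (s := (univ : Finset (Fin n)))
    (fun i => (i : ℕ) < p)
  simp only [Fin.le_def, Fin.val_castSucc, not_lt, card_univ, Fintype.card_fin] at *
  omega

theorem inversions_snocPerm (p : Fin (n + 1)) (π : Equiv.Perm (Fin n)) :
    inversions (snocPerm p π) = (n - p) + inversions π := by
  have h : ∑ i : Fin n, (if p ≤ (π i).castSucc then 1 else 0) = n - p := by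
    rw [Equiv.sum_comp π fun i => if p ≤ i.castSucc then 1 else 0, ← card_filter,
      card_filter_le_castSucc]
  simp only [inversions, card_filter, Fintype.sum_prod_type]
  simp [Fin.sum_univ_castSucc, Fin.lt_succAbove_iff_le_castSucc, sum_add_distrib, h,
    Fin.castSucc_lt_last, (Fin.castSucc_lt_last _).not_gt, -Finset.sum_boole]
  ring

theorem commonAscent_snocPerm_zero (p r : Fin 1) (π ρ : Equiv.Perm (Fin 0)) :
    ¬ CommonAscent (snocPerm p π) (snocPerm r ρ) := by
  rintro ⟨i, j, h, -⟩
  omega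

theorem commonAscent_snocPerm (p r : Fin (n + 2)) (π ρ : Equiv.Perm (Fin (n + 1))) :
    CommonAscent (snocPerm p π) (snocPerm r ρ) ↔ CommonAscent π ρ ∨
      ((π (Fin.last n)).castSucc < p ∧ (ρ (Fin.last n)).castSucc < r) := by
  constructor
  · rintro ⟨i, j, hij, h₁, h₂⟩
    induction i using Fin.lastCases with
    | last => have := j.isLt; simp at hij; omega
    | cast i =>
      induction j using Fin.lastCases with
      | last =>
        obtain rfl : i = Fin.last n := by ext; simpa using hij
        right
        simpa [Fin.succAbove_lt_iff_castSucc_lt] using And.intro h₁ h₂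
      | cast j =>
        left
        exact ⟨i, j, by simpa using hij, by simpa using h₁, by simpa using h₂⟩
  · rintro (⟨i, j, hij, h₁, h₂⟩ | ⟨h₁, h₂⟩)
    · exact ⟨i.castSucc, j.castSucc, by simpa using hij, by simpa using h₁, by simpa using h₂⟩
    · exact ⟨(Fin.last n).castSucc, Fin.last (n + 1), by simp,
        by simpa [Fin.succAbove_lt_iff_castSucc_lt] using h₁,
        by simpa [Fin.succAbove_lt_iff_castSucc_lt] using h₂⟩

end Equiv.Perm

open Equiv.Perm

section NoCommonAscent

variable (q : ℚ)

/-- The weight `q ^ (inv σ + inv τ)` of a pair of permutations, set to zero when the pair has a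
common ascent. -/
noncomputable def ascentFreeWeight {n : ℕ} (σ τ : Equiv.Perm (Fin n)) : ℚ :=
  if CommonAscent σ τ then 0 else q ^ (inversions σ + inversions τ)

theorem eval_W (n : ℕ) : (W n).eval q = ∑ σ : Equiv.Perm (Fin n), ∑ τ, ascentFreeWeight q σ τ := by
  rw [W, Polynomial.eval_finsetSum, sum_filter, Fintype.sum_prod_type]
  simp only [Polynomial.eval_pow, Polynomial.eval_X, ascentFreeWeight, ite_not]

theorem eval_W_zero : (W 0).eval q = 1 := by
  have h (π ρ : Equiv.Perm (Fin 0)) : ¬ CommonAscent π ρ := fun ⟨i, _⟩ => i.elim0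
  simp [eval_W, ascentFreeWeight, h, inversions]

theorem ascentFreeWeight_snocPerm_zero (p r : Fin 1) (π ρ : Equiv.Perm (Fin 0)) :
    ascentFreeWeight q (snocPerm p π) (snocPerm r ρ) = ascentFreeWeight q π ρ := by
  have h : ¬ CommonAscent π ρ := fun ⟨i, _⟩ => i.elim0
  simp [ascentFreeWeight, commonAscent_snocPerm_zero, h, inversions_snocPerm]

theorem ascentFreeWeight_snocPerm {n : ℕ} (p r : Fin (n + 2)) (π ρ : Equiv.Perm (Fin (n + 1))) :
    ascentFreeWeight q (snocPerm p π) (snocPerm r ρ) =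
      q ^ (n + 1 - p : ℕ) * q ^ (n + 1 - r : ℕ) *
        if (π (Fin.last n)).castSucc < p ∧ (ρ (Fin.last n)).castSucc < r then 0
        else ascentFreeWeight q π ρ := by
  simp only [ascentFreeWeight, commonAscent_snocPerm, inversions_snocPerm]
  split_ifs <;> first | (exfalso; tauto) | ring

/-- The weighted count of pairs without common ascent whose last values are `a` and `b`. -/
noncomputable def lastValueSum (n : ℕ) (a b : Fin (n + 1)) : ℚ :=
  ∑ π, ∑ ρ, ascentFreeWeight q (snocPerm a π) (snocPerm b ρ)

theorem eval_W_succ (n : ℕ) : (W (n + 1)).eval q = ∑ a, ∑ b, lastValueSum q n a b := by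
  rw [eval_W, sum_eq_sum_snocPerm]
  refine sum_congr rfl fun a _ => ?_
  simp only [sum_eq_sum_snocPerm, lastValueSum]
  rw [sum_comm]

theorem lastValueSum_zero (a b : Fin 1) : lastValueSum q 0 a b = (W 0).eval q := by
  simp only [lastValueSum, ascentFreeWeight_snocPerm_zero, eval_W]

theorem lastValueSum_succ (n : ℕ) (a b : Fin (n + 2)) :
    lastValueSum q (n + 1) a b = q ^ (n + 1 - a : ℕ) * q ^ (n + 1 - b : ℕ) *
      ((W (n + 1)).eval q - ∑ a', ∑ b',
        if a'.castSucc < a ∧ b'.castSucc < b then lastValueSum q n a' b' else 0) := by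
  simp only [lastValueSum, ascentFreeWeight_snocPerm q a b, ← mul_sum]
  rw [sum_eq_sum_snocPerm, eval_W_succ, ← sum_sub_distrib]
  congr 1
  refine sum_congr rfl fun a' _ => ?_
  simp only [sum_eq_sum_snocPerm (n := n), lastValueSum]
  rw [sum_comm, ← sum_sub_distrib]
  refine sum_congr rfl fun b' _ => ?_
  simp only [snocPerm_last]
  split_ifs <;> simp

theorem sum_ite_castSucc_lt {n : ℕ} (a : Fin (n + 2)) (f : ℕ → ℚ) :
    ∑ i : Fin (n + 1), (if i.castSucc < a then f i else 0) = ∑ i ∈ range a, f i := by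
  simp only [Fin.lt_def, Fin.val_castSucc]
  rw [Fin.sum_univ_eq_sum_range fun i => if i < (a : ℕ) then f i else 0, ← sum_filter]
  congr 1
  ext i
  simp only [mem_filter, mem_range]
  omega

theorem sum_sum_sum_mul_mul {ι κ : Type*} [Fintype ι] (s : Finset κ) (c : κ → ℚ)
    (f g : κ → ι → ℚ) :
    ∑ a, ∑ b, ∑ j ∈ s, c j * f j a * g j b = ∑ j ∈ s, c j * (∑ a, f j a) * ∑ b, g j b := by
  simp only [sum_comm (t := s), mul_sum, sum_mul]
  exact sum_congr rfl fun j _ => sum_comm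

theorem lastValueSum_eq (n : ℕ) (a b : Fin (n + 1)) :
    lastValueSum q n a b = ∑ j ∈ range (n + 1), (-1) ^ j * (W (n - j)).eval q *
      (q ^ ((j + 1) * (n - a)) * gaussBinom q a j) *
      (q ^ ((j + 1) * (n - b)) * gaussBinom q b j) := by
  induction n with
  | zero => simp [lastValueSum_zero]
  | succ n ih =>
    have h : (∑ a' : Fin (n + 1), ∑ b' : Fin (n + 1),
        if a'.castSucc < a ∧ b'.castSucc < b then lastValueSum q n a' b' else 0) =
        ∑ j ∈ range (n + 1), (-1) ^ j * (W (n - j)).eval q *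
          (q ^ ((j + 1) * (n + 1 - a)) * gaussBinom q a (j + 1)) *
          (q ^ ((j + 1) * (n + 1 - b)) * gaussBinom q b (j + 1)) := by
      simp only [← sum_range_pow_mul_gaussBinom q n _ (Nat.le_of_lt_succ a.isLt),
        ← sum_range_pow_mul_gaussBinom q n _ (Nat.le_of_lt_succ b.isLt),
        ← sum_ite_castSucc_lt,
        ← sum_sum_sum_mul_mul]
      refine sum_congr rfl fun a' _ => sum_congr rfl fun b' _ => ?_
      rw [ih]
      split_ifs with h₁ h₂ h₂ <;> first | tauto | simp
    rw [lastValueSum_succ, h, sum_range_succ' _ (n + 1), mul_sub, mul_sum, sub_eq_add_neg, add_comm,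
      ← sum_neg_distrib]
    congr 1
    · refine sum_congr rfl fun j _ => ?_
      rw [Nat.add_sub_add_right]
      ring
    · simp
      ring

theorem eval_W_succ_eq_sum (n : ℕ) :
    (W (n + 1)).eval q = ∑ j ∈ range (n + 1), (-1) ^ j * (W (n - j)).eval q *
      gaussBinom q (n + 1) (j + 1) ^ 2 := by
  have h (j : ℕ) : gaussBinom q (n + 1) (j + 1) =
      ∑ a : Fin (n + 1), q ^ ((j + 1) * (n - a)) * gaussBinom q a j := by
    rw [Fin.sum_univ_eq_sum_range fun i => q ^ ((j + 1) * (n - i)) * gaussBinom q i j,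
      sum_range_pow_mul_gaussBinom q n j le_rfl]
    simp
  simp only [eval_W_succ, lastValueSum_eq, h, sq, ← mul_assoc]
  rw [← sum_sum_sum_mul_mul]
  simp only [mul_assoc]

theorem sum_gaussBinom_sq_mul_eval_W {q : ℚ} (hq : 1 < q) {n : ℕ} (hn : n ≠ 0) :
    ∑ k ∈ range (n + 1), gaussBinom q n k ^ 2 * ((-1) ^ k * (W k).eval q) = 0 := by
  obtain ⟨n, rfl⟩ := Nat.exists_eq_succ_of_ne_zero hn
  rw [Nat.succ_eq_add_one, sum_range_succ, eval_W_succ_eq_sum, gaussBinom_self,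
    ← sum_range_reflect, mul_sum, mul_sum, ← sum_add_distrib]
  refine sum_eq_zero fun j hj => ?_
  have hj : j ≤ n := Nat.le_of_lt_succ (mem_range.1 hj)
  rw [show n + 1 - 1 - j = n - j by omega, ← gaussBinom_symm hq (by omega : j + 1 ≤ n + 1),
    show n + 1 - (j + 1) = n - j by omega]
  obtain ⟨c, rfl⟩ := Nat.exists_eq_add_of_le hj
  rw [Nat.add_sub_cancel_left, show j + c + 1 = c + 1 + j by ring, pow_add _ (c + 1) j]
  have : ((-1 : ℚ) ^ j) * (-1) ^ j = 1 := by rw [← mul_pow]; simp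
  linear_combination (- (-1) ^ c * (W c).eval q * gaussBinom q (c + 1 + j) c ^ 2) * this

end NoCommonAscent

open Module

section SubspaceCount

variable {K V : Type*} [Field K] [AddCommGroup V] [Module K V] [Finite V]

/-- Linearly independent `k`-tuples in `V` amount to a `k`-dimensional subspace together with
a linearly independent `k`-tuple in it. -/
theorem sigma_linearIndependent_bijective (k : ℕ) :
    Function.Bijective fun s : Σ Z : {Z : Submodule K V // finrank K Z = k},
        {s : Fin k → Z.1 // LinearIndependent K s} =>
      (⟨Submodule.subtype _ ∘ s.2.1, s.2.2.map' _ (Submodule.ker_subtype _)⟩ :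
        {s : Fin k → V // LinearIndependent K s}) := by
  have span_eq (Z : Submodule K V) (hZ : finrank K Z = k) (s : Fin k → Z)
      (hs : LinearIndependent K s) : Submodule.span K (Set.range (Z.subtype ∘ s)) = Z := by
    refine Submodule.eq_of_le_of_finrank_eq ?_ ?_
    · rw [Submodule.span_le]
      rintro _ ⟨i, rfl⟩
      exact (s i).2
    · rw [finrank_span_eq_card (hs.map' _ (Submodule.ker_subtype _)), hZ, Fintype.card_fin]
  constructor
  · rintro ⟨⟨Z, hZ⟩, s, hs⟩ ⟨⟨Z', hZ'⟩, s', hs'⟩ h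
    have h : Z.subtype ∘ s = Z'.subtype ∘ s' := congrArg Subtype.val h
    obtain rfl : Z = Z' := by rw [← span_eq Z hZ s hs, h, span_eq Z' hZ' s' hs']
    obtain rfl : s = s' := Z.injective_subtype.comp_left h
    rfl
  · rintro ⟨s, hs⟩
    exact ⟨⟨⟨Submodule.span K (Set.range s), by rw [finrank_span_eq_card hs, Fintype.card_fin]⟩,
      _, linearIndependent_span hs⟩, rfl⟩

variable [Fintype K]

/-- The number of `k`-dimensional subspaces is a Gaussian binomial coefficient. -/
theorem card_submodule_finrank_eq {k : ℕ} (hk : k ≤ finrank K V) :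
    (Nat.card {Z : Submodule K V // finrank K Z = k} : ℚ) =
      gaussBinom (Fintype.card K) (finrank K V) k := by
  have hq : (1 : ℚ) < Fintype.card K := by exact_mod_cast Fintype.one_lt_card
  have cast_prod (m : ℕ) (hm : k ≤ m) :
      ((∏ i : Fin k, (Fintype.card K ^ m - Fintype.card K ^ (i : ℕ)) : ℕ) : ℚ) =
        ∏ i ∈ range k, ((Fintype.card K : ℚ) ^ m - Fintype.card K ^ i) := by
    rw [← Fin.prod_univ_eq_prod_range, Nat.cast_prod]
    refine prod_congr rfl fun i _ => ?_
    rw [Nat.cast_sub (Nat.pow_le_pow_right Fintype.card_pos (by omega))]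
    push_cast
    rfl
  have : Finite (Submodule K V) := Finite.of_injective _ SetLike.coe_injective
  have : Fintype {Z : Submodule K V // finrank K Z = k} := Fintype.ofFinite _
  have h := Nat.card_congr (Equiv.ofBijective _ (sigma_linearIndependent_bijective (K := K)
    (V := V) k))
  have h' (Z : {Z : Submodule K V // finrank K Z = k}) :
      Nat.card {s : Fin k → Z.1 // LinearIndependent K s} =
        ∏ i : Fin k, (Fintype.card K ^ k - Fintype.card K ^ (i : ℕ)) := by
    rw [card_linearIndependent Z.2.ge, Z.2]
  rw [Nat.card_sigma, card_linearIndependent hk] at h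
  simp only [h', sum_const, smul_eq_mul, card_univ,
    ← Nat.card_eq_fintype_card (α := {Z : Submodule K V // finrank K Z = k})] at h
  have h := congrArg (Nat.cast (R := ℚ)) h
  rw [Nat.cast_mul, cast_prod _ le_rfl, cast_prod _ hk,
    ← gaussBinom_mul_prod_pow_sub_pow hq hk] at h
  refine mul_right_cancel₀ (prod_ne_zero_iff.2 fun i hi => ?_) h
  exact (sub_pos.2 (pow_lt_pow_right₀ hq (mem_range.1 hi))).ne'

/-- The number of `k`-dimensional subspaces of a given subspace. -/
theorem card_submodule_le_finrank_eq (X : Submodule K V) {k : ℕ} (hk : k ≤ finrank K X) :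
    (Nat.card {Z : Submodule K V // Z ≤ X ∧ finrank K Z = k} : ℚ) =
      gaussBinom (Fintype.card K) (finrank K X) k := by
  rw [← card_submodule_finrank_eq hk]
  congr 1
  refine Nat.card_congr (.trans (Equiv.subtypeSubtypeEquivSubtypeInter (· ≤ X) _).symm
    (X.mapIic.toEquiv.subtypeEquiv fun Z => ?_).symm)
  exact Eq.congr_left (Submodule.finrank_map_subtype_eq X Z).symm

end SubspaceCount

section SegrePoset

variable {F : Type} [Field F] {n : ℕ}

/-- The common dimension of the two components of an element of the Segre product. -/
noncomputable def SegrePoset.dim (x : SegrePoset F n) : ℕ := finrank F x.1.1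

theorem SegrePoset.le_def {x y : SegrePoset F n} : x ≤ y ↔ x.1.1 ≤ y.1.1 ∧ x.1.2 ≤ y.1.2 :=
  Iff.rfl

theorem segreBot_le (x : SegrePoset F n) : segreBot F n ≤ x :=
  SegrePoset.le_def.2 ⟨bot_le, bot_le⟩

theorem SegrePoset.dim_mono {x y : SegrePoset F n} (h : x ≤ y) : x.dim ≤ y.dim :=
  Submodule.finrank_mono h.1

theorem SegrePoset.dim_lt_dim {x y : SegrePoset F n} (h : x < y) : x.dim < y.dim := by
  refine (dim_mono h.le).lt_of_ne fun hd => h.ne ?_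
  have hd' : finrank F x.1.2 = finrank F y.1.2 := by rw [← x.2, ← y.2]; exact hd
  exact Subtype.ext (Prod.ext (Submodule.eq_of_le_of_finrank_eq h.le.1 hd)
    (Submodule.eq_of_le_of_finrank_eq h.le.2 hd'))

variable [Fintype F]

theorem SegrePoset.card_filter_le_dim_eq (x : SegrePoset F n) {k : ℕ} (hk : k ≤ x.dim) :
    (#{y : SegrePoset F n | y ≤ x ∧ y.dim = k} : ℚ) =
      gaussBinom (Fintype.card F) x.dim k ^ 2 := by
  have h₁ := card_submodule_le_finrank_eq x.1.1 hk
  have h₂ := card_submodule_le_finrank_eq x.1.2 (hk.trans x.2.le)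
  rw [← x.2] at h₂
  rw [sq, dim, ← h₁]
  nth_rw 2 [h₁]
  rw [← h₂, ← Nat.cast_mul, ← Nat.card_prod, ← Fintype.card_subtype, ← Nat.card_eq_fintype_card]
  congr 1
  exact Nat.card_congr
    { toFun y := (⟨y.1.1.1, y.2.1.1, y.2.2⟩, ⟨y.1.1.2, y.2.1.2, y.1.2.symm.trans y.2.2⟩)
      invFun z := ⟨⟨(z.1.1, z.2.1), z.1.2.2.trans z.2.2.2.symm⟩, ⟨z.1.2.1, z.2.2.1⟩, z.1.2.2⟩
      left_inv _ := rfl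
      right_inv _ := rfl }

theorem SegrePoset.sum_Icc_segreBot (x : SegrePoset F n) (f : ℕ → ℚ) :
    ∑ y ∈ Icc (segreBot F n) x, f y.dim =
      ∑ k ∈ range (x.dim + 1), gaussBinom (Fintype.card F) x.dim k ^ 2 * f k := by
  rw [← sum_fiberwise_of_maps_to (g := dim) (t := range (x.dim + 1))
    fun y hy => mem_range.2 (Nat.lt_succ_of_le (dim_mono (mem_Icc.1 hy).2))]
  refine sum_congr rfl fun k hk => ?_
  rw [← card_filter_le_dim_eq x (Nat.le_of_lt_succ (mem_range.1 hk)),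
    sum_congr rfl fun y hy => congrArg f (mem_filter.1 hy).2, sum_const, nsmul_eq_mul]
  congr 3
  ext y
  simp [segreBot_le]

theorem mu_segreBot (x : SegrePoset F n) :
    IncidenceAlgebra.mu ℚ (segreBot F n) x =
      (-1) ^ x.dim * (W x.dim).eval (Fintype.card F : ℚ) := by
  induction hd : x.dim using Nat.strong_induction_on generalizing x with
  | _ d ih =>
    subst hd
    rcases eq_or_ne (segreBot F n) x with rfl | hx
    · have h : (segreBot F n).dim = 0 := finrank_bot F _
      simp [h, eval_W_zero]
    · have hq : (1 : ℚ) < Fintype.card F := by exact_mod_cast Fintype.one_lt_card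
      have hdim : x.dim ≠ 0 :=
        (Nat.zero_le _).trans_lt (SegrePoset.dim_lt_dim ((segreBot_le x).lt_of_ne hx)) |>.ne'
      have h := SegrePoset.sum_Icc_segreBot x
        fun k => (-1) ^ k * (W k).eval (Fintype.card F : ℚ)
      rw [sum_gaussBinom_sq_mul_eval_W hq hdim, ← Ico_insert_right (segreBot_le x),
        sum_insert right_notMem_Ico, add_eq_zero_iff_eq_neg] at h
      rw [IncidenceAlgebra.mu_eq_neg_sum_Ico_of_ne hx, h]
      congr 1
      exact sum_congr rfl fun y hy => ih _ (SegrePoset.dim_lt_dim (mem_Ico.1 hy).2) y rfl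

end SegrePoset

/-- the Möbius function of the Segre product of `B_n(q)` with itself
between its minimum and maximum equals `(-1)^n W_n(q)`, where `q` is the order of the
field. -/
theorem mobius_segre (F : Type) [Field F] [Fintype F] (n : ℕ) :
    IncidenceAlgebra.mu ℚ (segreBot F n) (segreTop F n) =
      (-1 : ℚ) ^ n * (W n).eval (Fintype.card F : ℚ) := by
  have h : (segreTop F n).dim = n := (finrank_top F _).trans (finrank_fin_fun F)
  rw [mu_segreBot, h]
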